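/- arXiv:2002.04134 — 2 statements merged into one kernel-verified Lean document; each statement's English description precedes it below -/
import Mathlib

section
/- In ℤ[x,y], let R(x,y) denote the resultant with respect to z of the two polynomials (z²+12z+16)³ + x·(z+11) and (z²−228z+496)³ + y·(z+11)⁵, each regarded as a polynomial in z (of degree 6) with coefficients in ℤ[x,y]. Then R(x,y) = R(y,x). -/
open Polynomial

/-- The Sylvester matrix of two polynomials `f`, `g`, regarded as having degrees (at most)
`m` and `n` respectively: an `(n+m) × (n+m)` matrix whose first `n` rows carry the shifted
coefficient sequences of `f` and whose last `m` rows carry those of `g`. -/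
noncomputable def sylvesterMat {R : Type*} [CommRing R] (m n : ℕ) (f g : Polynomial R) :
    Matrix (Fin (n + m)) (Fin (n + m)) R := fun i j =>
  if (i : ℕ) < n then
    (if (i : ℕ) ≤ (j : ℕ) then f.coeff ((j : ℕ) - (i : ℕ)) else 0)
  else
    (if (i : ℕ) - n ≤ (j : ℕ) then g.coeff ((j : ℕ) - ((i : ℕ) - n)) else 0)

/-- The resultant of `f` and `g`, regarded as polynomials of degrees `m` and `n`:
the determinant of their Sylvester matrix. -/
noncomputable def resultantD {R : Type*} [CommRing R] (m n : ℕ) (f g : Polynomial R) : R :=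
  (sylvesterMat m n f g).det

/-- `R(x,y) = Res_z((z²+12z+16)³ + x(z+11), (z²−228z+496)³ + y(z+11)⁵)`, the resultant
being taken of two polynomials of degree 6 in `z` with coefficients in the ring `A`
containing `x` and `y`. -/
noncomputable def Rres {A : Type*} [CommRing A] (x y : A) : A :=
  resultantD 6 6
    ((X ^ 2 + 12 * X + 16) ^ 3 + C x * (X + 11))
    ((X ^ 2 - 228 * X + 496) ^ 3 + C y * (X + 11) ^ 5)

lemma sylvesterMat_eq {R : Type*} [CommRing R] (m n : ℕ) (f g : Polynomial R)
    (hf : f.natDegree ≤ m) (hg : g.natDegree ≤ n) :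
    sylvesterMat m n f g = (sylvester g f n m).transpose := by
  ext i j
  rw [Matrix.transpose_apply, sylvester, Matrix.of_apply]
  induction i using Fin.addCases with
  | left i =>
    have h := i.isLt
    simp only [sylvesterMat, Fin.addCases_left, Fin.val_castAdd, h, if_true, Set.mem_Icc]
    by_cases h1 : (i : ℕ) ≤ j
    · by_cases h2 : (j : ℕ) ≤ i + m
      · simp [h1, h2]
      · simp only [h1, h2, if_true, and_false, if_false]
        exact coeff_eq_zero_of_natDegree_lt (by omega)
    · simp [h1]
  | right i =>
    have h : ¬ (n + (i : ℕ) < n) := by omega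
    simp only [sylvesterMat, Fin.addCases_right, Fin.val_natAdd, h, if_false, Set.mem_Icc,
      Nat.add_sub_cancel_left]
    by_cases h1 : (i : ℕ) ≤ j
    · by_cases h2 : (j : ℕ) ≤ i + n
      · simp [h1, h2]
      · simp only [h1, h2, if_true, and_false, if_false]
        exact coeff_eq_zero_of_natDegree_lt (by omega)
    · simp [h1]

/-- The first polynomial. -/
noncomputable def polyF {A : Type*} [CommRing A] (x : A) : A[X] :=
  (X ^ 2 + 12 * X + 16) ^ 3 + C x * (X + 11)

/-- The second polynomial. -/
noncomputable def polyG {A : Type*} [CommRing A] (y : A) : A[X] :=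
  (X ^ 2 - 228 * X + 496) ^ 3 + C y * (X + 11) ^ 5

lemma polyF_natDegree_le {A : Type*} [CommRing A] (x : A) : (polyF x).natDegree ≤ 6 := by
  unfold polyF; compute_degree

lemma polyG_natDegree_le {A : Type*} [CommRing A] (x : A) : (polyG x).natDegree ≤ 6 := by
  unfold polyG; compute_degree

lemma polyF_natDegree {A : Type*} [CommRing A] [Nontrivial A] (x : A) :
    (polyF x).natDegree = 6 := by
  unfold polyF; compute_degree!

lemma polyF_monic {A : Type*} [CommRing A] [Nontrivial A] (x : A) : (polyF x).Monic := by
  rw [Monic, leadingCoeff, polyF_natDegree]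
  unfold polyF; compute_degree!

lemma Rres_eq {A : Type*} [CommRing A] (x y : A) :
    Rres x y = resultant (polyF x) (polyG y) 6 6 := by
  rw [resultant_comm]
  change (sylvesterMat 6 6 (polyF x) (polyG y)).det = _
  rw [sylvesterMat_eq _ _ _ _ (polyF_natDegree_le x) (polyG_natDegree_le y),
    Matrix.det_transpose, resultant]
  norm_num

lemma map_Rres {A B : Type*} [CommRing A] [CommRing B] (φ : A →+* B) (x y : A) :
    φ (Rres x y) = Rres (φ x) (φ y) := by
  rw [Rres_eq, Rres_eq, ← resultant_map_map]
  have h1 : (polyF x).map φ = polyF (φ x) := by simp [polyF]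
  have h2 : (polyG y).map φ = polyG (φ y) := by simp [polyG]
  rw [h1, h2]

lemma key_eval {K : Type*} [Field K] [CharZero K] [IsAlgClosed K] (x y a : K)
    (ha : a ∈ (polyF x).roots) :
    125 * (polyG y).eval a =
      ((polyF y).roots.map (fun b => 125 - (a + 11) * (b + 11))).prod := by
  have hw : a + 11 ≠ 0 := by
    intro h
    have ha' : a = -11 := by linear_combination h
    have h0 := isRoot_of_mem_roots ha
    rw [ha'] at h0
    simp [polyF, IsRoot] at h0
    norm_num at h0
  have hs : (polyF y).Splits := IsAlgClosed.splits _
  have hcard : Multiset.card (polyF y).roots = 6 := by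
    rw [← hs.natDegree_eq_card_roots, polyF_natDegree]
  have h1 : ((polyF y).roots.map (fun b => 125 - (a + 11) * (b + 11))).prod
      = (a + 11) ^ 6 * (polyF y).eval (125 / (a + 11) - 11) := by
    rw [hs.eval_eq_prod_roots_of_monic (polyF_monic y)]
    have h2 : (a + 11) ^ 6 = ((polyF y).roots.map (fun _ => a + 11)).prod := by
      rw [Multiset.map_const', Multiset.prod_replicate, hcard]
    rw [h2, ← Multiset.prod_map_mul]
    congr 1
    refine Multiset.map_congr rfl fun b _ => ?_
    field_simp
    ring
  rw [h1]
  simp [polyF, polyG]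
  field_simp
  ring

lemma Rres_field {K : Type*} [Field K] [CharZero K] [IsAlgClosed K] (x y : K) :
    125 ^ 6 * Rres x y = ((polyF x).roots.map (fun a =>
      ((polyF y).roots.map (fun b => 125 - (a + 11) * (b + 11))).prod)).prod := by
  have hs : (polyF x).Splits := IsAlgClosed.splits _
  have hcard : Multiset.card (polyF x).roots = 6 := by
    rw [← hs.natDegree_eq_card_roots, polyF_natDegree]
  have h := resultant_eq_prod_eval (polyF x) (polyG y) 6 (polyG_natDegree_le y) hs
  rw [polyF_natDegree, (polyF_monic x).leadingCoeff, one_pow, one_mul] at h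
  have h2 : (125 : K) ^ 6 = ((polyF x).roots.map (fun _ => (125 : K))).prod := by
    rw [Multiset.map_const', Multiset.prod_replicate, hcard]
  rw [Rres_eq, h, h2, ← Multiset.prod_map_mul]
  congr 1
  exact Multiset.map_congr rfl fun a ha => key_eval x y a ha

lemma Rres_field_symm {K : Type*} [Field K] [CharZero K] [IsAlgClosed K] (x y : K) :
    Rres x y = Rres y x := by
  have h : (125 : K) ^ 6 ≠ 0 := by norm_num
  apply mul_left_cancel₀ h
  rw [Rres_field, Rres_field, Multiset.prod_map_prod_map]
  simp only [mul_comm]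

/-- The symmetry `R(x,y) = R(y,x)` in `ℤ[x,y]`, which expresses the symmetry
`Φ₅(x,y) = Φ₅(y,x)` of the modular polynomial of level 5 via
`5¹⁵·Φ₅(x,y) = Res_z((z²+12z+16)³+x(z+11), (z²−228z+496)³+y(z+11)⁵)`. -/
theorem modular_resultant_symmetric :
    Rres (MvPolynomial.X 0 : MvPolynomial (Fin 2) ℤ) (MvPolynomial.X 1) =
      Rres (MvPolynomial.X 1 : MvPolynomial (Fin 2) ℤ) (MvPolynomial.X 0) := by
  let P := MvPolynomial (Fin 2) ℤ
  let K := AlgebraicClosure (FractionRing P)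
  have hinj : Function.Injective
      ((algebraMap (FractionRing P) K).comp (algebraMap P (FractionRing P))) :=
    (algebraMap (FractionRing P) K).injective.comp (IsFractionRing.injective P (FractionRing P))
  have : CharZero K :=
    (RingHom.charZero_iff hinj).1 inferInstance
  apply hinj
  rw [map_Rres, map_Rres]
  exact Rres_field_symm _ _
end

section
/- Let ζ = exp(2πi/5) ∈ ℂ and, in PGL₂(ℂ), let S, T, U be the images of the matrices [[ζ,0],[0,1]], [[−(1+√5),2],[2,1+√5]], [[0,−1],[1,0]] respectively, and set A = S·T·S⁻². Let G₆₀ be the subgroup generated by S and T and G₁₀ the subgroup generated by S and U. Then G₁₀ has order 10, G₁₀ ⊆ G₆₀, and every element of G₆₀ can be written uniquely in the form h·Tⁱ·Aᵏ with h ∈ G₁₀, i ∈ {0,1}, k ∈ {0,1,2}; that is, the six elements Tⁱ·Aᵏ are a complete set of representatives for the right cosets of G₁₀ in G₆₀. -/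
open Matrix Complex

/-- `PGL₂(ℂ)`: the quotient of `GL₂(ℂ)` by its center. -/
abbrev PGL2C : Type := GL (Fin 2) ℂ ⧸ Subgroup.center (GL (Fin 2) ℂ)

lemma pgl_mk_eq (M N : GL (Fin 2) ℂ) (c : ℂ)
    (h : (M : Matrix (Fin 2) (Fin 2) ℂ) = c • (N : Matrix (Fin 2) (Fin 2) ℂ)) :
    (QuotientGroup.mk M : PGL2C) = QuotientGroup.mk N := by
  symm
  rw [QuotientGroup.eq, Matrix.GeneralLinearGroup.mem_center_iff_val_mem_range_scalar]
  have h1 : ((N⁻¹ * M : GL (Fin 2) ℂ) : Matrix (Fin 2) (Fin 2) ℂ) = c • 1 := by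
    rw [Units.val_mul, h, mul_smul_comm, ← Units.val_mul]
    simp
  rw [h1]
  exact ⟨c, by ext i j; simp [Matrix.smul_apply, Matrix.one_apply, Matrix.diagonal_apply]⟩

lemma pgl_mk_eq_imp (M N : GL (Fin 2) ℂ)
    (h : (QuotientGroup.mk M : PGL2C) = QuotientGroup.mk N) :
    ∃ c : ℂ, (N : Matrix (Fin 2) (Fin 2) ℂ) = c • (M : Matrix (Fin 2) (Fin 2) ℂ) := by
  rw [QuotientGroup.eq, Matrix.GeneralLinearGroup.mem_center_iff_val_mem_range_scalar] at h
  obtain ⟨c, hc⟩ := h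
  refine ⟨c, ?_⟩
  have : (N : Matrix (Fin 2) (Fin 2) ℂ) = M * ((M⁻¹ * N : GL (Fin 2) ℂ)) := by
    rw [← Units.val_mul]; simp
  rw [this, ← hc]
  ext i j
  simp [mul_comm]

lemma zeta_facts (ζ : ℂ) (hζ : ζ = Complex.exp (2 * Real.pi * Complex.I / 5)) :
    ζ^4+ζ^3+ζ^2+ζ+1 = 0 ∧ (Real.sqrt 5 : ℂ) = 1 + 2 * (ζ + ζ^4) := by
  have hp : IsPrimitiveRoot ζ 5 := by
    rw [hζ]; exact_mod_cast Complex.isPrimitiveRoot_exp 5 (by norm_num)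
  have h5 := hp.pow_eq_one
  have hne := hp.ne_one (by norm_num)
  have h1 : ζ^4+ζ^3+ζ^2+ζ+1 = 0 := by
    have : (ζ - 1) * (ζ^4+ζ^3+ζ^2+ζ+1) = 0 := by linear_combination h5
    exact (mul_eq_zero.1 this).resolve_left (sub_ne_zero.2 hne)
  refine ⟨h1, ?_⟩
  have h4 : ζ^4 = Complex.exp (-(2 * Real.pi / 5 : ℂ) * Complex.I) := by
    have e : ζ * Complex.exp (-(2 * Real.pi / 5 : ℂ) * Complex.I) = 1 := by
      rw [hζ, ← Complex.exp_add]; ring_nf; simp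
    have : ζ ≠ 0 := hp.ne_zero (by norm_num)
    apply mul_left_cancel₀ this
    rw [e]; linear_combination h5
  have hc : ζ + ζ^4 = 2 * Complex.cos (2 * Real.pi / 5 : ℂ) := by
    rw [h4, hζ, Complex.two_cos]; ring_nf
  rw [hc]
  have h2 : Real.cos (2 * Real.pi / 5) = (Real.sqrt 5 - 1) / 4 := by
    rw [show 2 * Real.pi / 5 = 2 * (Real.pi / 5) by ring, Real.cos_two_mul, Real.cos_pi_div_five]
    have := Real.sq_sqrt (show (0:ℝ) ≤ 5 by norm_num)
    linear_combination (1/8) * this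
  have h3 : Complex.cos (2 * Real.pi / 5 : ℂ) = (((Real.sqrt 5 - 1) / 4 : ℝ) : ℂ) := by
    rw [← h2]; push_cast; rfl
  rw [h3]; push_cast; ring

/-- The exponent `j` for which `Tⁱ·Aᵏ` lies in the coset of `T·Sʲ` (`5` for the trivial coset). -/
def cosetIdx : Fin 2 → Fin 3 → ℕ := ![![5, 3, 4], ![0, 2, 1]]

lemma cosetIdx_inj : ∀ i k i' k', cosetIdx i k = cosetIdx i' k' → i = i' ∧ k = k' := by
  decide

lemma cosetIdx_lt : ∀ i k, (i = 0 ∧ k = 0) ∨ cosetIdx i k < 5 := by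
  decide

lemma cosetIdx_surj (j : ℕ) (hj : j < 5) : ∃ i k, cosetIdx i k = j := by
  interval_cases j
  · exact ⟨1, 0, rfl⟩
  · exact ⟨1, 2, rfl⟩
  · exact ⟨1, 1, rfl⟩
  · exact ⟨0, 1, rfl⟩
  · exact ⟨0, 2, rfl⟩

section abstractPart
variable {G : Type*} [Group G]

lemma pow_mod5 (S : G) (hS : S ^ 5 = 1) (n : ℕ) : S ^ (n % 5) = S ^ n := by
  conv_rhs => rw [← Nat.mod_add_div n 5, pow_add, pow_mul, hS, one_pow, mul_one]

lemma conj_table (S T U : G) (hS : S ^ 5 = 1) (hT : T * T = 1) (hU : U * U = 1)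
    (hUS : U * S = S ^ 4 * U) (hUT : U * T = T * U)
    (h1 : T * S * T = S ^ 4 * T * S ^ 4) (h2 : T * S ^ 2 * T = S ^ 2 * U * T * S ^ 2)
    (H : Subgroup G) (hSH : S ∈ H) (hUH : U ∈ H) (n : ℕ) (hn : 0 < n) (hn5 : n < 5) :
    ∃ a ∈ H, ∃ m < 5, T * S ^ n * T = a * T * S ^ m := by
  have hTi : T⁻¹ = T := inv_eq_of_mul_eq_one_left hT
  have hUi : U⁻¹ = U := inv_eq_of_mul_eq_one_left hU
  have e1 : (S ^ 4)⁻¹ = S := inv_eq_of_mul_eq_one_left (by rw [← hS]; group)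
  have e4 : S⁻¹ = S ^ 4 := inv_eq_of_mul_eq_one_left (by rw [← hS]; group)
  have e2 : (S ^ 2)⁻¹ = S ^ 3 := inv_eq_of_mul_eq_one_left (by rw [← hS]; group)
  have h4 : T * S ^ 4 * T = S * T * S := by
    have := congrArg (·⁻¹) h1
    simp only [_root_.mul_inv_rev, hTi, e4, e1] at this
    simpa [mul_assoc] using this
  have h3 : T * S ^ 3 * T = S ^ 3 * U * T * S ^ 3 := by
    have := congrArg (·⁻¹) h2
    simp only [_root_.mul_inv_rev, hTi, e2, hUi] at this
    rw [mul_assoc (S ^ 3) U T, hUT]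
    simpa [mul_assoc] using this
  interval_cases n
  · exact ⟨S ^ 4, pow_mem hSH _, 4, by norm_num, by simpa using h1⟩
  · exact ⟨S ^ 2 * U, mul_mem (pow_mem hSH _) hUH, 2, by norm_num, h2⟩
  · exact ⟨S ^ 3 * U, mul_mem (pow_mem hSH _) hUH, 3, by norm_num, h3⟩
  · exact ⟨S, hSH, 1, by norm_num, by simpa using h4⟩

lemma rep_table (S T U A : G) (hS : S ^ 5 = 1) (hT : T * T = 1)
    (h1 : T * S * T = S ^ 4 * T * S ^ 4) (h2 : T * S ^ 2 * T = S ^ 2 * U * T * S ^ 2)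
    (hA : A = S * T * S⁻¹ * S⁻¹)
    (H : Subgroup G) (hSH : S ∈ H) (hUH : U ∈ H) (i : Fin 2) (k : Fin 3)
    (hik : cosetIdx i k < 5) :
    ∃ a ∈ H, T ^ (i : ℕ) * A ^ (k : ℕ) = a * T * S ^ (cosetIdx i k) := by
  have hTi : T⁻¹ = T := inv_eq_of_mul_eq_one_left hT
  have e1 : (S ^ 4)⁻¹ = S := inv_eq_of_mul_eq_one_left (by rw [← hS]; group)
  have e4 : S⁻¹ = S ^ 4 := inv_eq_of_mul_eq_one_left (by rw [← hS]; group)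
  have h4 : T * S ^ 4 * T = S * T * S := by
    have := congrArg (·⁻¹) h1
    simp only [_root_.mul_inv_rev, hTi, e4, e1] at this
    simpa [mul_assoc] using this
  have a1 : A = S * T * S ^ 3 := by
    rw [hA, e4]
    have : S ^ 4 * S ^ 4 = S ^ 3 := by
      rw [← pow_add, show 4 + 4 = 5 + 3 by norm_num, pow_add, hS, one_mul]
    rw [mul_assoc, this]
  have a2 : A ^ 2 = S ^ 2 * T * S ^ 4 := by
    calc A ^ 2 = S * (T * S ^ 4 * T) * S ^ 3 := by rw [a1]; simp only [pow_succ, pow_zero, one_mul, mul_assoc]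
      _ = _ := by rw [h4]; simp only [pow_succ, pow_zero, one_mul, mul_assoc]
  have ta : T * A = S ^ 4 * T * S ^ 2 := by
    calc T * A = (T * S * T) * S ^ 3 := by rw [a1]; simp only [pow_succ, pow_zero, one_mul, mul_assoc]
      _ = S ^ 4 * T * (S ^ 5 * S ^ 2) := by rw [h1]; group
      _ = _ := by rw [hS, one_mul]
  have ta2 : T * A ^ 2 = S ^ 2 * U * T * S := by
    calc T * A ^ 2 = (T * S ^ 2 * T) * S ^ 4 := by rw [a2]; group
      _ = S ^ 2 * U * T * (S ^ 5 * S) := by rw [h2]; group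
      _ = _ := by rw [hS, one_mul]
  fin_cases i <;> fin_cases k
  · exact absurd hik (by decide)
  · exact ⟨S, hSH, by simpa [cosetIdx] using a1⟩
  · exact ⟨S ^ 2, pow_mem hSH _, by simpa [cosetIdx] using a2⟩
  · exact ⟨1, one_mem _, by simp [cosetIdx]⟩
  · exact ⟨S ^ 4, pow_mem hSH _, by simpa [cosetIdx] using ta⟩
  · exact ⟨S ^ 2 * U, mul_mem (pow_mem hSH _) hUH, by simpa [cosetIdx] using ta2⟩

lemma coset_inj (S T U : G) (hS : S ^ 5 = 1) (hT : T * T = 1) (hU : U * U = 1)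
    (hUS : U * S = S ^ 4 * U) (hUT : U * T = T * U)
    (h1 : T * S * T = S ^ 4 * T * S ^ 4) (h2 : T * S ^ 2 * T = S ^ 2 * U * T * S ^ 2)
    (H : Subgroup G) (hSH : S ∈ H) (hUH : U ∈ H) (hTH : T ∉ H)
    (a b : G) (ha : a ∈ H) (hb : b ∈ H) (j j' : ℕ) (hj : j < 5) (hj' : j' < 5)
    (h : a * T * S ^ j = b * T * S ^ j') : j = j' := by
  wlog hlt : j ≤ j' generalizing a b j j'
  · exact (this b a hb ha j' j hj' hj h.symm (by omega)).symm
  by_contra hne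
  obtain ⟨d, rfl⟩ := Nat.exists_eq_add_of_le hlt
  obtain ⟨c, hc, m, -, hm⟩ := conj_table S T U hS hT hU hUS hUT h1 h2 H hSH hUH d
    (by omega) (by omega)
  have e : T * S ^ d * T = b⁻¹ * a := by
    rw [add_comm, pow_add, ← mul_assoc] at h
    have h' := mul_right_cancel h
    have : b⁻¹ * a * (T * T) = T * S ^ d * T := by
      rw [← mul_assoc, mul_assoc b⁻¹ a T, h']; group
    rw [← this, hT, mul_one]
  apply hTH
  have : T = c⁻¹ * (b⁻¹ * a) * (S ^ m)⁻¹ := by rw [← e, hm]; group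
  rw [this]
  exact mul_mem (mul_mem (inv_mem hc) (mul_mem (inv_mem hb) ha)) (inv_mem (pow_mem hSH _))

lemma abstract_cosets (S T U A : G) (hS : S ^ 5 = 1) (hT : T * T = 1) (hU : U * U = 1)
    (hUS : U * S = S ^ 4 * U) (hUT : U * T = T * U)
    (h1 : T * S * T = S ^ 4 * T * S ^ 4) (h2 : T * S ^ 2 * T = S ^ 2 * U * T * S ^ 2)
    (hA : A = S * T * S⁻¹ * S⁻¹)
    (K H : Subgroup G) (hK : K = Subgroup.closure {S, T}) (hH : H = Subgroup.closure {S, U})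
    (hTH : T ∉ H) :
    H ≤ K ∧ ∀ g ∈ K, ∃! x : H × Fin 2 × Fin 3,
      (x.1 : G) * T ^ (x.2.1 : ℕ) * A ^ (x.2.2 : ℕ) = g := by
  have hSH : S ∈ H := by rw [hH]; exact Subgroup.subset_closure (by simp)
  have hUH : U ∈ H := by rw [hH]; exact Subgroup.subset_closure (by simp)
  have hSK : S ∈ K := by rw [hK]; exact Subgroup.subset_closure (by simp)
  have hTK : T ∈ K := by rw [hK]; exact Subgroup.subset_closure (by simp)
  have hTi : T⁻¹ = T := inv_eq_of_mul_eq_one_left hT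
  have e4 : S⁻¹ = S ^ 4 := inv_eq_of_mul_eq_one_left (by rw [← hS]; group)
  have hUK : U ∈ K := by
    have : U = (S ^ 2)⁻¹ * (T * S ^ 2 * T) * (S ^ 2)⁻¹ * T⁻¹ := by rw [h2]; group
    rw [this]
    exact mul_mem (mul_mem (mul_mem (inv_mem (pow_mem hSK _))
      (mul_mem (mul_mem hTK (pow_mem hSK _)) hTK)) (inv_mem (pow_mem hSK _))) (inv_mem hTK)
  refine ⟨?_, ?_⟩
  · rw [hH, Subgroup.closure_le]
    rintro x (rfl | rfl)
    · exact hSK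
    · exact hUK
  intro g hg
  have mulS : ∀ x n, (x ∈ H ∨ ∃ a ∈ H, ∃ j < 5, x = a * T * S ^ j) →
      (x * S ^ n ∈ H ∨ ∃ a ∈ H, ∃ j < 5, x * S ^ n = a * T * S ^ j) := by
    rintro x n (hx | ⟨a, ha, j, hj, rfl⟩)
    · exact Or.inl (mul_mem hx (pow_mem hSH _))
    · refine Or.inr ⟨a, ha, (j + n) % 5, Nat.mod_lt _ (by norm_num), ?_⟩
      rw [pow_mod5 S hS (j + n), pow_add, mul_assoc (a * T)]
  have mulT : ∀ x, (x ∈ H ∨ ∃ a ∈ H, ∃ j < 5, x = a * T * S ^ j) →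
      (x * T ∈ H ∨ ∃ a ∈ H, ∃ j < 5, x * T = a * T * S ^ j) := by
    rintro x (hx | ⟨a, ha, j, hj, rfl⟩)
    · exact Or.inr ⟨x, hx, 0, by norm_num, by simp⟩
    · rcases Nat.eq_zero_or_pos j with rfl | hp
      · left; simpa [mul_assoc, hT] using ha
      · obtain ⟨c, hc, m, hm5, hm⟩ := conj_table S T U hS hT hU hUS hUT h1 h2 H hSH hUH j hp hj
        refine Or.inr ⟨a * c, mul_mem ha hc, m, hm5, ?_⟩
        calc a * T * S ^ j * T = a * (T * S ^ j * T) := by group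
          _ = _ := by rw [hm]; group
  have key : g ∈ H ∨ ∃ a ∈ H, ∃ j < 5, g = a * T * S ^ j := by
    rw [hK] at hg
    induction hg using Subgroup.closure_induction_right with
    | one => exact Or.inl (one_mem _)
    | mul_right x hx y hy ih =>
      rcases hy with rfl | rfl
      · simpa using mulS x 1 ih
      · exact mulT x ih
    | mul_inv_cancel x hx y hy ih =>
      rcases hy with rfl | rfl
      · rw [e4]; exact mulS x 4 ih
      · rw [hTi]; exact mulT x ih
  have R := rep_table S T U A hS hT h1 h2 hA H hSH hUH
  apply existsUnique_of_exists_of_unique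
  · rcases key with hg | ⟨a, ha, j, hj, rfl⟩
    · exact ⟨(⟨g, hg⟩, 0, 0), by simp⟩
    · obtain ⟨i, k, hik⟩ := cosetIdx_surj j hj
      obtain ⟨b, hb, hr⟩ := R i k (by omega)
      refine ⟨(⟨a * b⁻¹, mul_mem ha (inv_mem hb)⟩, i, k), ?_⟩
      simp only
      rw [mul_assoc, hr, hik]; group
  · rintro ⟨⟨a, ha⟩, i, k⟩ ⟨⟨b, hb⟩, i', k'⟩ hx hy
    simp only at hx hy
    have e := hx.trans hy.symm
    have hk : i = i' ∧ k = k' := by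
      rw [mul_assoc, mul_assoc] at e
      rcases cosetIdx_lt i k with ⟨rfl, rfl⟩ | hlt <;>
        rcases cosetIdx_lt i' k' with ⟨rfl, rfl⟩ | hlt'
      · exact ⟨rfl, rfl⟩
      · exfalso
        obtain ⟨c, hc, hr⟩ := R _ _ hlt'
        rw [hr] at e
        apply hTH
        have : T = (b * c)⁻¹ * a * (S ^ cosetIdx i' k')⁻¹ := by
          have e' : a = b * (c * T * S ^ cosetIdx i' k') := by simpa using e
          rw [e']; group
        rw [this]
        exact mul_mem (mul_mem (inv_mem (mul_mem hb hc)) ha) (inv_mem (pow_mem hSH _))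
      · exfalso
        obtain ⟨c, hc, hr⟩ := R _ _ hlt
        rw [hr] at e
        apply hTH
        have : T = (a * c)⁻¹ * b * (S ^ cosetIdx i k)⁻¹ := by
          have e' : b = a * (c * T * S ^ cosetIdx i k) := by simpa using e.symm
          rw [e']; group
        rw [this]
        exact mul_mem (mul_mem (inv_mem (mul_mem ha hc)) hb) (inv_mem (pow_mem hSH _))
      · obtain ⟨c, hc, hr⟩ := R _ _ hlt
        obtain ⟨c', hc', hr'⟩ := R _ _ hlt'
        rw [hr, hr'] at e
        apply cosetIdx_inj
        refine coset_inj S T U hS hT hU hUS hUT h1 h2 H hSH hUH hTH (a * c) (b * c')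
          (mul_mem ha hc) (mul_mem hb hc') _ _ hlt hlt' ?_
        simpa only [mul_assoc] using e
    obtain ⟨rfl, rfl⟩ := hk
    have : a = b := by simpa using e
    subst this
    rfl

lemma dihedral_elems (S U : G) (hS : S ^ 5 = 1) (hU : U * U = 1)
    (hUS : U * S = S ^ 4 * U) (g : G) (hg : g ∈ Subgroup.closure {S, U}) :
    ∃ i : Fin 5, ∃ e : Fin 2, g = S ^ (i : ℕ) * U ^ (e : ℕ) := by
  have hUi : U⁻¹ = U := inv_eq_of_mul_eq_one_left hU
  have e4 : S⁻¹ = S ^ 4 := inv_eq_of_mul_eq_one_left (by rw [← hS]; group)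
  have red : ∀ n : ℕ, ∀ e : Fin 2, ∃ i : Fin 5, ∃ e' : Fin 2,
      S ^ n * U ^ (e : ℕ) = S ^ (i : ℕ) * U ^ (e' : ℕ) := fun n e =>
    ⟨⟨n % 5, Nat.mod_lt _ (by norm_num)⟩, e, by rw [pow_mod5 S hS n]⟩
  have hUSn : ∀ n : ℕ, U * S ^ n = S ^ (4 * n) * U := by
    intro n
    induction n with
    | zero => simp
    | succ n ih =>
      rw [pow_succ, ← mul_assoc, ih, mul_assoc, hUS, ← mul_assoc, ← pow_add]
      rfl
  have mS : ∀ n : ℕ, ∀ x, (∃ i : Fin 5, ∃ e : Fin 2, x = S ^ (i : ℕ) * U ^ (e : ℕ)) →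
      ∃ i : Fin 5, ∃ e : Fin 2, x * S ^ n = S ^ (i : ℕ) * U ^ (e : ℕ) := by
    rintro n x ⟨i, e, rfl⟩
    fin_cases e
    · simpa [pow_add] using red (i + n) 0
    · simpa [pow_add, mul_assoc, hUSn] using red (i + 4 * n) 1
  have mU : ∀ x, (∃ i : Fin 5, ∃ e : Fin 2, x = S ^ (i : ℕ) * U ^ (e : ℕ)) →
      ∃ i : Fin 5, ∃ e : Fin 2, x * U = S ^ (i : ℕ) * U ^ (e : ℕ) := by
    rintro x ⟨i, e, rfl⟩
    fin_cases e
    · exact ⟨i, 1, by simp⟩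
    · exact ⟨i, 0, by simp [mul_assoc, hU]⟩
  induction hg using Subgroup.closure_induction_right with
  | one => exact ⟨0, 0, by simp⟩
  | mul_right x hx y hy ih =>
    rcases hy with rfl | rfl
    · simpa using mS 1 x ih
    · exact mU x ih
  | mul_inv_cancel x hx y hy ih =>
    rcases hy with rfl | rfl
    · rw [e4]; exact mS 4 x ih
    · rw [hUi]; exact mU x ih

lemma dihedral_card (S U : G) (hS : S ^ 5 = 1) (hS1 : S ≠ 1) (hU : U * U = 1)
    (hUS : U * S = S ^ 4 * U) (hUn : ∀ n : ℕ, U ≠ S ^ n) :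
    Nat.card (Subgroup.closure {S, U}) = 10 := by
  have hSH : S ∈ Subgroup.closure {S, U} := Subgroup.subset_closure (by simp)
  have hUH : U ∈ Subgroup.closure {S, U} := Subgroup.subset_closure (by simp)
  have ho : orderOf S = 5 := by
    have : Fact (Nat.Prime 5) := ⟨by norm_num⟩
    exact orderOf_eq_prime hS hS1
  have e4 : S⁻¹ = S ^ 4 := inv_eq_of_mul_eq_one_left (by rw [← hS]; group)
  let f : Fin 5 × Fin 2 → Subgroup.closure {S, U} := fun p =>
    ⟨S ^ (p.1 : ℕ) * U ^ (p.2 : ℕ), mul_mem (pow_mem hSH _) (pow_mem hUH _)⟩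
  have hU' : ∀ a b : ℕ, S ^ a * U ≠ S ^ b := by
    intro a b h
    apply hUn (4 * a + b)
    rw [pow_add, pow_mul, ← e4, ← h]; simp
  have hf : Function.Bijective f := by
    constructor
    · rintro ⟨i, e⟩ ⟨i', e'⟩ h
      have h : S ^ (i : ℕ) * U ^ (e : ℕ) = S ^ (i' : ℕ) * U ^ (e' : ℕ) := congrArg Subtype.val h
      have fin : S ^ (i : ℕ) = S ^ (i' : ℕ) → i = i' := fun h =>
        Fin.ext (pow_injOn_Iio_orderOf (by simp [ho]) (by simp [ho]) h)
      fin_cases e <;> fin_cases e'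
      · rw [fin (by simpa using h)]
      · exact absurd (by simpa using h.symm) (hU' i' i)
      · exact absurd (by simpa using h) (hU' i i')
      · rw [fin (by simpa using h)]
    · rintro ⟨g, hg⟩
      obtain ⟨i, e, rfl⟩ := dihedral_elems S U hS hU hUS g hg
      exact ⟨(i, e), rfl⟩
  rw [← Nat.card_congr (Equiv.ofBijective f hf)]
  simp

end abstractPart

/-- Lemma 6.2(d) of Morton's paper: with `S`, `T`, `U` the images in `PGL₂(ℂ)` of the
matrices `[[ζ,0],[0,1]]`, `[[−(1+√5),2],[2,1+√5]]`, `[[0,−1],[1,0]]` (`ζ = e^{2πi/5}`)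
and `A = S·T·S⁻²`, the subgroup `G₁₀ = ⟨S,U⟩` has order 10, is contained in
`G₆₀ = ⟨S,T⟩`, and the six elements `Tⁱ·Aᵏ` (`0 ≤ i ≤ 1`, `0 ≤ k ≤ 2`) form a complete
set of representatives of the right cosets of `G₁₀` in `G₆₀`: every element of `G₆₀` is
uniquely of the form `h·Tⁱ·Aᵏ` with `h ∈ G₁₀`. -/
theorem right_coset_representatives_G10_in_G60
    (ζ : ℂ) (hζ : ζ = Complex.exp (2 * Real.pi * Complex.I / 5))
    (MS MT MU : GL (Fin 2) ℂ)
    (hMS : (MS : Matrix (Fin 2) (Fin 2) ℂ) = !![ζ, 0; 0, 1])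
    (hMT : (MT : Matrix (Fin 2) (Fin 2) ℂ) =
      !![-(1 + (Real.sqrt 5 : ℂ)), 2; 2, 1 + (Real.sqrt 5 : ℂ)])
    (hMU : (MU : Matrix (Fin 2) (Fin 2) ℂ) = !![0, -1; 1, 0])
    (S T U : PGL2C) (hS : S = QuotientGroup.mk MS) (hT : T = QuotientGroup.mk MT)
    (hU : U = QuotientGroup.mk MU)
    (A : PGL2C) (hA : A = S * T * S⁻¹ * S⁻¹)
    (G60 G10 : Subgroup PGL2C)
    (hG60 : G60 = Subgroup.closure {S, T}) (hG10 : G10 = Subgroup.closure {S, U}) :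
    Nat.card G10 = 10 ∧
    G10 ≤ G60 ∧
    ∀ g ∈ G60, ∃! x : G10 × Fin 2 × Fin 3,
      (x.1 : PGL2C) * T ^ (x.2.1 : ℕ) * A ^ (x.2.2 : ℕ) = g := by
  obtain ⟨hz, hs⟩ := zeta_facts ζ hζ
  have z5 : ζ ^ 5 = 1 := by linear_combination (ζ - 1) * hz
  have z1 : ζ ≠ 1 := by
    rintro h
    rw [h] at hz
    norm_num at hz
  have hpow : ∀ n : ℕ, ((MS ^ n : GL (Fin 2) ℂ) : Matrix (Fin 2) (Fin 2) ℂ) =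
      !![ζ ^ n, 0; 0, 1] := by
    intro n
    induction n with
    | zero => simp [Matrix.one_fin_two]
    | succ n ih => rw [pow_succ, Units.val_mul, ih, hMS]; simp [pow_succ]
  rw [hs] at hMT
  have rS : S ^ 5 = 1 := by
    rw [hS, ← QuotientGroup.mk_pow, ← QuotientGroup.mk_one]
    apply pgl_mk_eq _ _ 1
    rw [hpow, z5]; simp [Matrix.one_fin_two]
  have rT : T * T = 1 := by
    rw [hT, ← QuotientGroup.mk_mul, ← QuotientGroup.mk_one]
    apply pgl_mk_eq _ _ (4 * (1 + ζ + ζ ^ 4) ^ 2 + 4)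
    rw [Units.val_mul, hMT, Units.val_one, Matrix.one_fin_two]
    ext i j
    fin_cases i <;> fin_cases j <;> simp <;> ring
  have rU : U * U = 1 := by
    rw [hU, ← QuotientGroup.mk_mul, ← QuotientGroup.mk_one]
    apply pgl_mk_eq _ _ (-1)
    rw [Units.val_mul, hMU, Units.val_one, Matrix.one_fin_two]
    ext i j
    fin_cases i <;> fin_cases j <;> simp
  have rUS : U * S = S ^ 4 * U := by
    rw [hU, hS, ← QuotientGroup.mk_pow, ← QuotientGroup.mk_mul, ← QuotientGroup.mk_mul]
    apply pgl_mk_eq _ _ ζ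
    rw [Units.val_mul, Units.val_mul, hpow, hMS, hMU]
    ext i j
    fin_cases i <;> fin_cases j <;> simp
    grind
  have rUT : U * T = T * U := by
    rw [hU, hT, ← QuotientGroup.mk_mul, ← QuotientGroup.mk_mul]
    apply pgl_mk_eq _ _ (-1)
    rw [Units.val_mul, Units.val_mul, hMT, hMU]
    ext i j
    fin_cases i <;> fin_cases j <;> simp
  have r1 : T * S * T = S ^ 4 * T * S ^ 4 := by
    rw [hT, hS, ← QuotientGroup.mk_pow, ← QuotientGroup.mk_mul, ← QuotientGroup.mk_mul,
      ← QuotientGroup.mk_mul, ← QuotientGroup.mk_mul]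
    apply pgl_mk_eq _ _ (2 * (ζ + (1 + ζ + ζ ^ 4) ^ 2) * (ζ + ζ ^ 4))
    simp only [Units.val_mul, hpow, hMS, hMT]
    ext i j
    fin_cases i <;> fin_cases j <;> simp <;> grind
  have r2 : T * S ^ 2 * T = S ^ 2 * U * T * S ^ 2 := by
    rw [hT, hS, hU]
    simp only [← QuotientGroup.mk_pow, ← QuotientGroup.mk_mul]
    apply pgl_mk_eq _ _ (2 * (ζ ^ 2 + (1 + ζ + ζ ^ 4) ^ 2))
    simp only [Units.val_mul, hpow, hMU, hMT]
    ext i j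
    fin_cases i <;> fin_cases j <;> simp <;> grind
  have hS1 : S ≠ 1 := by
    intro h
    rw [hS, ← QuotientGroup.mk_one] at h
    obtain ⟨c, hc⟩ := pgl_mk_eq_imp _ _ h.symm
    rw [hMS] at hc
    have h0 := congrFun (congrFun hc 0) 0
    have h1 := congrFun (congrFun hc 1) 1
    simp at h0 h1
    exact z1 (h0.trans h1.symm)
  have hUn : ∀ n : ℕ, U ≠ S ^ n := by
    intro n h
    rw [hU, hS, ← QuotientGroup.mk_pow] at h
    obtain ⟨c, hc⟩ := pgl_mk_eq_imp _ _ h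
    rw [hpow, hMU] at hc
    have h1 := congrFun (congrFun hc 1) 1
    simp at h1
  have hTH : T ∉ G10 := by
    intro h
    rw [hG10] at h
    obtain ⟨i, e, he⟩ := dihedral_elems S U rS rU rUS T h
    rw [hT, hS, hU] at he
    have ht : (2 + 2 * (ζ + ζ ^ 4)) ≠ 0 := by
      intro h0
      have : (0 : ℂ) = 1 := by grind
      norm_num at this
    fin_cases e
    · simp only [pow_zero, mul_one, ← QuotientGroup.mk_pow] at he
      obtain ⟨c, hc⟩ := pgl_mk_eq_imp _ _ he.symm
      rw [hpow, hMT] at hc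
      have h1 := congrFun (congrFun hc 0) 1
      simp at h1
    · simp only [pow_one, ← QuotientGroup.mk_pow, ← QuotientGroup.mk_mul] at he
      obtain ⟨c, hc⟩ := pgl_mk_eq_imp _ _ he.symm
      rw [Units.val_mul, hpow, hMT, hMU] at hc
      have h1 := congrFun (congrFun hc 1) 1
      simp at h1
      exact ht (by linear_combination h1)
  refine ⟨?_, abstract_cosets S T U A rS rT rU rUS rUT r1 r2 hA G60 G10 hG60 hG10 hTH⟩
  rw [hG10]
  exact dihedral_card S U rS hS1 rU rUS hUn
end
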